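/- Let d ≥ 2 and λ ∈ [0,1). Define F : Δ → ℝ by F(x) = ½‖x − λe₂‖² − λ log(1 + √(1 − x₁²)) + λ√(1 − x₁²) + (λ−1) log x₁, T x = (x₁/‖x‖) e₁ + ((1 − 1/‖x‖) x₂ + λ) e₂ + (1 − 1/‖x‖) ∑_{j=3}^d x_j e_j, and x* = √(1−λ²) e₁ + λ e₂. Then for x ∈ Δ one has F(T x) = F(x) if and only if x = x*. -/

import Mathlib

noncomputable section

open Metric Set Filter

/-- Euclidean space `ℝ^d` with `d = d' + 2 ≥ 2`. -/
abbrev Euc (d : ℕ) := EuclideanSpace ℝ (Fin (d + 2))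

/-- The standard basis vectors. -/
def e (d : ℕ) (j : Fin (d + 2)) : Euc d := EuclideanSpace.single j 1

/-- The Douglas–Rachford operator for the unit sphere and the line
`L_λ = {t e₁ + λ e₂}`, given by its explicit formula
`T x = (x₁/‖x‖) e₁ + ((1 − 1/‖x‖) x₂ + λ) e₂ + (1 − 1/‖x‖) ∑_{j=3}^d x_j e_j`. -/
def DR (d : ℕ) (lam : ℝ) (x : Euc d) : Euc d :=
  (x 0 / ‖x‖) • e d 0 + ((1 - 1 / ‖x‖) * x 1 + lam) • e d 1 +
    ∑ j ∈ Finset.univ.filter (fun j : Fin (d + 2) => 2 ≤ (j : ℕ)),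
      ((1 - 1 / ‖x‖) * x j) • e d j

/-- The intersection point `x* = √(1−λ²) e₁ + λ e₂`. -/
def xStar (d : ℕ) (lam : ℝ) : Euc d := Real.sqrt (1 - lam ^ 2) • e d 0 + lam • e d 1

/-- The Lyapunov-type function of Benoist:
`F(x) = ½‖x − λe₂‖² − λ log(1 + √(1 − x₁²)) + λ√(1 − x₁²) + (λ−1) log x₁`. -/
def F (d : ℕ) (lam : ℝ) (x : Euc d) : ℝ :=
  (1 / 2) * ‖x - lam • e d 1‖ ^ 2 - lam * Real.log (1 + Real.sqrt (1 - (x 0) ^ 2)) +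
    lam * Real.sqrt (1 - (x 0) ^ 2) + (lam - 1) * Real.log (x 0)

/-- `Δ = {x : 0 < x₁ ≤ 1}`. -/
def Delta (d : ℕ) : Set (Euc d) := {x | 0 < x 0 ∧ x 0 ≤ 1}

/-!
Write `s = √(1 - x₁²)` and `t = √(1 - (T x)₁²)`. Then
`F x - F (T x) = B t s + (λ - t)² / 2 + λ (‖x‖ t - x₂)`,
where `B` is the Bregman divergence of the part of `F` that depends on `x₁` only. The last term is
nonnegative because `(‖x‖ t)² = ‖x‖² - x₁² ≥ x₂²`. That part of `F` is not convex, so `B t s` can be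
negative when `t < λ`, but `B t s > -(λ - t)² / 2` unless `s = t = λ`:

* for `λ ≤ t` the sign of `∂B/∂s` shows `B t s > 0` when `s ≠ t`;
* for `t < λ` and `t ≤ s`, `∂B/∂s ≥ -(s - t) / 2` as long as `s ≤ λ`, and `∂B/∂s ≥ 0` afterwards;
* for `s < t < λ` and `t ≤ 4 / 5`, completing a square gives
  `∂B/∂s ≤ (λ - t)² t / (4 (1 - t²))`;
* for `s < t < λ` and `t ≥ 4 / 5`, `B` is affine in `λ`, so only `λ = t` and `λ = 1` matter; at
  `λ = 1`, quasiconcavity of `s (1 - s) / √(1 - s²)` reduces `B ≥ 0` to the endpoints `s = 0` and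
  `s = t`.

Equality therefore forces `s = t = λ`, so `‖x‖ = 1` and `λ (λ - x₂) = 0`, and then
`‖x - x*‖² = 2 λ (λ - x₂) = 0`.
-/

theorem sub_lt_sub_of_hasDerivAt_lt {f g f' g' : ℝ → ℝ} {a b : ℝ} (hab : a < b)
    (hf : ∀ x ∈ Icc a b, HasDerivAt f (f' x) x) (hg : ∀ x ∈ Icc a b, HasDerivAt g (g' x) x)
    (hlt : ∀ x ∈ Ioo a b, f' x < g' x) : f b - f a < g b - g a := by
  have hderiv (x) (hx : x ∈ Icc a b) := (hg x hx).sub (hf x hx)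
  have hmono : StrictMonoOn (g - f) (Icc a b) := by
    refine strictMonoOn_of_hasDerivWithinAt_pos (f' := g' - f') (convex_Icc a b)
      (fun x hx => (hderiv x hx).continuousAt.continuousWithinAt)
      (fun x hx => (hderiv x (interior_subset hx)).hasDerivWithinAt) fun x hx => ?_
    rw [interior_Icc] at hx
    exact sub_pos.2 (hlt x hx)
  have := hmono (left_mem_Icc.2 hab.le) (right_mem_Icc.2 hab.le) hab
  simp only [Pi.sub_apply] at this
  linarith

theorem sub_le_sub_of_hasDerivAt_le {f g f' g' : ℝ → ℝ} {a b : ℝ} (hab : a ≤ b)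
    (hf : ∀ x ∈ Icc a b, HasDerivAt f (f' x) x) (hg : ∀ x ∈ Icc a b, HasDerivAt g (g' x) x)
    (hle : ∀ x ∈ Ioo a b, f' x ≤ g' x) : f b - f a ≤ g b - g a := by
  have hderiv (x) (hx : x ∈ Icc a b) := (hg x hx).sub (hf x hx)
  have hmono : MonotoneOn (g - f) (Icc a b) := by
    refine monotoneOn_of_hasDerivWithinAt_nonneg (f' := g' - f') (convex_Icc a b)
      (fun x hx => (hderiv x hx).continuousAt.continuousWithinAt)
      (fun x hx => (hderiv x (interior_subset hx)).hasDerivWithinAt) fun x hx => ?_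
    rw [interior_Icc] at hx
    exact sub_nonneg.2 (hle x hx)
  have := hmono (left_mem_Icc.2 hab) (right_mem_Icc.2 hab) hab
  simp only [Pi.sub_apply] at this
  linarith

theorem two_mul_add_cube_le_log_one_add {t : ℝ} (ht : 0 ≤ t) :
    2 * (t / (2 + t)) + 2 / 3 * (t / (2 + t)) ^ 3 ≤ Real.log (1 + t) := by
  have hlt : t / (2 + t) < 1 := (div_lt_one (by positivity)).2 (by linarith)
  have hquot : (1 + t / (2 + t)) / (1 - t / (2 + t)) = 1 + t := by
    rw [div_eq_iff (sub_pos.2 hlt).ne']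
    field_simp
    ring
  have hseries := Real.sum_range_le_log_div (x := t / (2 + t)) (by positivity) hlt 2
  norm_num [hquot, Finset.sum_range_succ] at hseries
  linarith

/-- The tangent of the angle in `(-π/2, π/2)` whose sine is `s`; junk value `0` if `1 ≤ |s|`. -/
def tanOfSin (s : ℝ) : ℝ := s / √(1 - s ^ 2)

theorem tanOfSin_nonneg {s : ℝ} (hs : 0 ≤ s) : 0 ≤ tanOfSin s :=
  div_nonneg hs (Real.sqrt_nonneg _)

theorem tanOfSin_pos {s : ℝ} (hs : 0 < s) (hs1 : s < 1) : 0 < tanOfSin s :=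
  div_pos hs (Real.sqrt_pos.2 (sub_pos.2 (pow_lt_one₀ hs.le hs1 two_ne_zero)))

theorem tanOfSin_sq {s : ℝ} (hs : s ^ 2 ≤ 1) : tanOfSin s ^ 2 = s ^ 2 / (1 - s ^ 2) := by
  rw [tanOfSin, div_pow, Real.sq_sqrt (sub_nonneg.2 hs)]

theorem tanOfSin_mul_sqrt {s : ℝ} (hs : s ^ 2 < 1) : tanOfSin s * √(1 - s ^ 2) = s :=
  div_mul_cancel₀ s (Real.sqrt_pos.2 (sub_pos.2 hs)).ne'

theorem strictMonoOn_tanOfSin : StrictMonoOn tanOfSin (Ioo (-1) 1) := by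
  intro x hx y hy hxy
  simp only [tanOfSin, ← Real.tan_arcsin]
  refine Real.strictMonoOn_tan ?_ ?_
    (Real.strictMonoOn_arcsin (Ioo_subset_Icc_self hx) (Ioo_subset_Icc_self hy) hxy)
  · exact ⟨Real.neg_pi_div_two_lt_arcsin.2 hx.1, Real.arcsin_lt_pi_div_two.2 hx.2⟩
  · exact ⟨Real.neg_pi_div_two_lt_arcsin.2 hy.1, Real.arcsin_lt_pi_div_two.2 hy.2⟩

theorem sq_tanOfSin_mul_one_sub {x : ℝ} (hx : x ^ 2 < 1) :
    (tanOfSin x * (1 - x)) ^ 2 = x ^ 2 * (1 - x) / (1 + x) := by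
  have hx_sub : 1 - x ≠ 0 := (sub_pos.2 (lt_of_abs_lt ((sq_lt_one_iff_abs_lt_one x).1 hx))).ne'
  rw [mul_pow, tanOfSin_sq hx.le, show 1 - x ^ 2 = (1 - x) * (1 + x) by ring]
  field_simp

theorem tanOfSin_mul_one_sub_le_iff {x t : ℝ} (hx : 0 ≤ x) (hxt : x < t) (ht : t < 1) :
    tanOfSin x * (1 - x) ≤ tanOfSin t * (1 - t) ↔
      0 ≤ x + t - x ^ 2 - t ^ 2 - x * t * (x + t) := by
  have ht0 : 0 < t := hx.trans_lt hxt
  have hfactor : t ^ 2 * (1 - t) * (1 + x) - x ^ 2 * (1 - x) * (1 + t) =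
      (t - x) * (x + t - x ^ 2 - t ^ 2 - x * t * (x + t)) := by ring
  rw [← sq_le_sq₀ (mul_nonneg (tanOfSin_nonneg hx) (by linarith))
      (mul_nonneg (tanOfSin_nonneg ht0.le) (by linarith)),
    sq_tanOfSin_mul_one_sub (pow_lt_one₀ hx (hxt.trans ht) two_ne_zero),
    sq_tanOfSin_mul_one_sub (pow_lt_one₀ ht0.le ht two_ne_zero),
    div_le_div_iff₀ (by linarith) (by linarith), ← sub_nonneg, hfactor,
    mul_nonneg_iff_of_pos_left (sub_pos.2 hxt)]

/-- One half of the quasiconcavity of `x ↦ tanOfSin x * (1 - x)` on `[0, 1)`. -/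
theorem tanOfSin_mul_one_sub_le_of_le {x y t : ℝ} (hx : 0 ≤ x) (hxy : x ≤ y) (hyt : y < t)
    (ht : t < 1) (h : tanOfSin y * (1 - y) ≤ tanOfSin t * (1 - t)) :
    tanOfSin x * (1 - x) ≤ tanOfSin t * (1 - t) := by
  rcases hx.eq_or_lt with rfl | hx_pos
  · simpa [tanOfSin] using mul_nonneg (tanOfSin_nonneg (hxy.trans hyt.le)) (sub_pos.2 ht).le
  rw [tanOfSin_mul_one_sub_le_iff (hx.trans hxy) hyt ht] at h
  rw [tanOfSin_mul_one_sub_le_iff hx (hxy.trans_lt hyt) ht]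
  have ht0 : 0 < t := by linarith
  have hconcave : y * (x + t - x ^ 2 - t ^ 2 - x * t * (x + t)) =
      x * (y + t - y ^ 2 - t ^ 2 - y * t * (y + t)) +
        (y - x) * (t * (1 - t) + (1 + t) * (x * y)) := by ring
  refine nonneg_of_mul_nonneg_right (hconcave ▸ add_nonneg (mul_nonneg hx h) ?_)
    (hx_pos.trans_le hxy)
  have hy0 : 0 ≤ y := hx.trans hxy
  have ht1 : 0 ≤ 1 - t := by linarith
  exact mul_nonneg (sub_nonneg.2 hxy) (by positivity)

theorem tanOfSin_mul_one_sub_le {t : ℝ} (ht : 0 ≤ t) (ht1 : t < 1) :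
    tanOfSin t * (1 - t) ≤ t * (1 / 6 + 3 / 2 * ((1 - t) / (1 + t))) := by
  have hratio : 0 ≤ (1 - t) / (1 + t) := div_nonneg (by linarith) (by linarith)
  refine le_of_sq_le_sq ?_ (by positivity)
  rw [sq_tanOfSin_mul_one_sub (pow_lt_one₀ ht ht1 two_ne_zero), mul_div_assoc, mul_pow]
  gcongr
  -- The weights make the AM-GM estimate of `√((1 - t) / (1 + t))` sharp at `t = 4 / 5`.
  nlinarith [sq_nonneg (1 / 6 - 3 / 2 * ((1 - t) / (1 + t)))]

theorem half_sq_add_tanOfSin_mul_lt_log {t : ℝ} (ht : 4 / 5 ≤ t) (ht1 : t < 1) :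
    t ^ 2 / 2 + tanOfSin t * (1 - t) < Real.log (1 + t) := by
  have ht0 : 0 < t := by linarith
  have hpoly : 0 < -3 * t ^ 5 - 13 * t ^ 4 + 40 * t ^ 2 + 16 * t - 32 := by
    obtain ⟨z, rfl⟩ : ∃ z, t = 4 / 5 + z := ⟨t - 4 / 5, by ring⟩
    have hz : 0 ≤ z := by linarith
    have hz1 : z ≤ 1 / 5 := by linarith
    nlinarith [mul_nonneg hz (sub_nonneg.2 hz1), pow_nonneg hz 2, pow_nonneg hz 3,
      mul_nonneg (pow_nonneg hz 2) (sub_nonneg.2 hz1),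
      mul_nonneg (pow_nonneg hz 3) (sub_nonneg.2 hz1),
      mul_nonneg (pow_nonneg hz 4) (sub_nonneg.2 hz1)]
  have hgap : 2 * (t / (2 + t)) + 2 / 3 * (t / (2 + t)) ^ 3 -
      (t ^ 2 / 2 + t * (1 / 6 + 3 / 2 * ((1 - t) / (1 + t)))) =
      t * (-3 * t ^ 5 - 13 * t ^ 4 + 40 * t ^ 2 + 16 * t - 32) / (6 * (1 + t) * (2 + t) ^ 3) := by
    field_simp
    ring
  have hgap_pos : 0 < t * (-3 * t ^ 5 - 13 * t ^ 4 + 40 * t ^ 2 + 16 * t - 32) /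
      (6 * (1 + t) * (2 + t) ^ 3) := by positivity
  linarith [tanOfSin_mul_one_sub_le ht0.le ht1, two_mul_add_cube_le_log_one_add ht0.le]

/-- The part of the Lyapunov function that depends on the first coordinate `a` only, in terms of
`s = √(1 - a²)`, including `a² / 2`. -/
def profile (l s : ℝ) : ℝ :=
  (1 - s ^ 2) / 2 + l * (s - Real.log (1 + s)) + (l - 1) / 2 * Real.log (1 - s ^ 2)

/-- The Bregman divergence of `profile l`, seen as a function of `a = √(1 - s²)`, at the points with
parameters `s` and `t`; the derivative with respect to `a` at `t` is `tanOfSin t * (l - t)`. -/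
def profileBregman (l t s : ℝ) : ℝ :=
  profile l s - profile l t - tanOfSin t * (l - t) * (√(1 - s ^ 2) - √(1 - t ^ 2))

theorem profileBregman_self (l t : ℝ) : profileBregman l t t = 0 := by
  simp [profileBregman]

theorem profileBregman_affine (l t s : ℝ) :
    (1 - t) * profileBregman l t s =
      (1 - l) * profileBregman t t s + (l - t) * profileBregman 1 t s := by
  simp only [profileBregman, profile]
  ring

theorem hasDerivAt_profile (l : ℝ) {s : ℝ} (hs : s ∈ Ioo (-1) 1) :
    HasDerivAt (profile l) (-tanOfSin s ^ 2 * (l - s)) s := by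
  have hpos : 0 < 1 - s ^ 2 := by nlinarith [hs.1, hs.2]
  have hs_add : 1 + s ≠ 0 := by linarith [hs.1]
  have hs_sub : 1 - s ≠ 0 := by linarith [hs.2]
  have hquad : HasDerivAt (fun s : ℝ => 1 - s ^ 2) (-(2 * s)) s := by
    simpa using (hasDerivAt_pow 2 s).const_sub 1
  have hlog : HasDerivAt (fun s : ℝ => Real.log (1 + s)) (1 / (1 + s)) s :=
    ((hasDerivAt_id s).const_add 1).log hs_add
  refine (((hquad.div_const 2).add (((hasDerivAt_id s).sub hlog).const_mul l)).add
    ((hquad.log hpos.ne').const_mul ((l - 1) / 2))).congr_deriv ?_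
  rw [tanOfSin_sq (by linarith), show 1 - s ^ 2 = (1 + s) * (1 - s) by ring]
  field_simp
  ring

theorem hasDerivAt_profileBregman (l t : ℝ) {s : ℝ} (hs : s ∈ Ioo (-1) 1) :
    HasDerivAt (profileBregman l t)
      (tanOfSin s * (tanOfSin t * (l - t) - tanOfSin s * (l - s))) s := by
  have hpos : 0 < 1 - s ^ 2 := by nlinarith [hs.1, hs.2]
  have hsqrt : HasDerivAt (fun s : ℝ => √(1 - s ^ 2)) (-tanOfSin s) s := by
    refine (((hasDerivAt_pow 2 s).const_sub 1).sqrt hpos.ne').congr_deriv ?_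
    rw [tanOfSin]
    field_simp
    ring
  refine (((hasDerivAt_profile l hs).sub_const (profile l t)).sub
    ((hsqrt.sub_const √(1 - t ^ 2)).const_mul (tanOfSin t * (l - t)))).congr_deriv ?_
  ring

section Comparison

variable {l t a b : ℝ}

theorem profileBregman_le_of_deriv_nonneg (ha : 0 ≤ a) (hab : a ≤ b) (hb : b < 1)
    (h : ∀ x ∈ Ioo a b, tanOfSin x * (l - x) ≤ tanOfSin t * (l - t)) :
    profileBregman l t a ≤ profileBregman l t b := by
  have := sub_le_sub_of_hasDerivAt_le hab (fun x _ => hasDerivAt_const x (0 : ℝ))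
    (fun x hx => hasDerivAt_profileBregman l t ⟨by linarith [hx.1], hx.2.trans_lt hb⟩) fun x hx =>
      mul_nonneg (tanOfSin_nonneg (ha.trans hx.1.le)) (sub_nonneg.2 (h x hx))
  linarith

theorem profileBregman_le_of_deriv_nonpos (ha : 0 ≤ a) (hab : a ≤ b) (hb : b < 1)
    (h : ∀ x ∈ Ioo a b, tanOfSin t * (l - t) ≤ tanOfSin x * (l - x)) :
    profileBregman l t b ≤ profileBregman l t a := by
  have := sub_le_sub_of_hasDerivAt_le hab
    (fun x hx => hasDerivAt_profileBregman l t ⟨by linarith [hx.1], hx.2.trans_lt hb⟩)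
    (fun x _ => hasDerivAt_const x (0 : ℝ)) fun x hx =>
      mul_nonpos_of_nonneg_of_nonpos (tanOfSin_nonneg (ha.trans hx.1.le)) (sub_nonpos.2 (h x hx))
  linarith

end Comparison

theorem profileBregman_pos_of_le {l t s : ℝ} (hl : 0 ≤ l) (hlt : l ≤ t) (ht : t < 1)
    (hs : 0 ≤ s) (hs1 : s < 1) (hst : s ≠ t) : 0 < profileBregman l t s := by
  have ht0 : 0 ≤ t := hl.trans hlt
  rcases hst.lt_or_gt with hst | hts
  · have := sub_lt_sub_of_hasDerivAt_lt hst
      (fun x hx => hasDerivAt_profileBregman l t ⟨by linarith [hx.1], hx.2.trans_lt ht⟩)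
      (fun x _ => hasDerivAt_const x (0 : ℝ)) fun x hx => by
        have hx0 : 0 < x := hs.trans_lt hx.1
        have htan := strictMonoOn_tanOfSin ⟨by linarith, hx.2.trans ht⟩ ⟨by linarith, ht⟩ hx.2
        have htanx := tanOfSin_pos hx0 (hx.2.trans ht)
        refine mul_neg_of_pos_of_neg htanx ?_
        nlinarith [mul_nonneg (sub_nonneg.2 htan.le) (sub_nonneg.2 hlt),
          mul_pos htanx (sub_pos.2 hx.2)]
    linarith [profileBregman_self l t]
  · have := sub_lt_sub_of_hasDerivAt_lt hts (fun x _ => hasDerivAt_const x (0 : ℝ))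
      (fun x hx => hasDerivAt_profileBregman l t ⟨by linarith [hx.1], hx.2.trans_lt hs1⟩)
      fun x hx => by
        have htan := strictMonoOn_tanOfSin ⟨by linarith, ht⟩
          ⟨by linarith [hx.1], hx.2.trans hs1⟩ hx.1
        have htanx := (tanOfSin_nonneg ht0).trans_lt htan
        refine mul_pos htanx ?_
        nlinarith [mul_nonneg (sub_nonneg.2 htan.le) (sub_nonneg.2 hlt),
          mul_pos htanx (sub_pos.2 hx.1)]
    linarith [profileBregman_self l t]

theorem mul_div_one_sub_sq_le_tanOfSin_mul {t x : ℝ} (ht : 0 ≤ t) (htx : t ≤ x) (hx : x < 1) :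
    x * t / (1 - t ^ 2) ≤ tanOfSin x * tanOfSin t := by
  have hx0 : 0 ≤ x := ht.trans htx
  have hx_sq : 0 < 1 - x ^ 2 := sub_pos.2 (pow_lt_one₀ hx0 hx two_ne_zero)
  have hcos : √(1 - x ^ 2) ≤ √(1 - t ^ 2) := by gcongr
  have ht_sq : 0 < 1 - t ^ 2 := hx_sq.trans_le (by gcongr)
  rw [tanOfSin, tanOfSin, div_mul_div_comm]
  gcongr
  calc √(1 - x ^ 2) * √(1 - t ^ 2) ≤ √(1 - t ^ 2) * √(1 - t ^ 2) := by gcongr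
    _ = 1 - t ^ 2 := Real.mul_self_sqrt ht_sq.le

theorem tanOfSin_sq_mul_sub_le {l t x : ℝ} (hx : -1 < x) (htx : t ≤ x) (hx1 : x < 1)
    (hl : l ≤ 1) :
    tanOfSin x ^ 2 * (l - x) ≤ x ^ 2 / ((1 + x) * (1 - t)) * (l - t) := by
  have hx_sub : 0 < 1 - x := sub_pos.2 hx1
  have hx_add : 0 < 1 + x := by linarith
  have ht_sub : 0 < 1 - t := by linarith
  have hchord : (l - x) / (1 - x) ≤ (l - t) / (1 - t) := by
    rw [div_le_div_iff₀ hx_sub ht_sub]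
    nlinarith
  calc tanOfSin x ^ 2 * (l - x) = x ^ 2 / (1 + x) * ((l - x) / (1 - x)) := by
        rw [tanOfSin_sq (by nlinarith), show 1 - x ^ 2 = (1 + x) * (1 - x) by ring]
        field_simp
    _ ≤ x ^ 2 / (1 + x) * ((l - t) / (1 - t)) := by gcongr
    _ = x ^ 2 / ((1 + x) * (1 - t)) * (l - t) := by field_simp

theorem tanOfSin_mul_sub_le_half {l t x : ℝ} (ht : 0 ≤ t) (htx : t ≤ x) (hx : x < 1)
    (htl : t ≤ l) (hl : l ≤ 1) :
    tanOfSin x * (tanOfSin x * (l - x) - tanOfSin t * (l - t)) ≤ (x - t) / 2 := by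
  have hx0 : 0 ≤ x := ht.trans htx
  have ht_sub : 0 < 1 - t := by linarith
  have hlt : 0 ≤ l - t := sub_nonneg.2 htl
  have hxt : 0 ≤ x - t := sub_nonneg.2 htx
  have hsq := tanOfSin_sq_mul_sub_le (by linarith) htx hx hl
  have hprod := mul_div_one_sub_sq_le_tanOfSin_mul ht htx hx
  calc tanOfSin x * (tanOfSin x * (l - x) - tanOfSin t * (l - t))
      = tanOfSin x ^ 2 * (l - x) - tanOfSin x * tanOfSin t * (l - t) := by ring
    _ ≤ x ^ 2 / ((1 + x) * (1 - t)) * (l - t) - x * t / (1 - t ^ 2) * (l - t) := by gcongr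
    _ = (l - t) / (1 - t) * (x / ((1 + x) * (1 + t)) * (x - t)) := by
        rw [show 1 - t ^ 2 = (1 + t) * (1 - t) by ring]
        field_simp
        ring
    _ ≤ 1 * (1 / 2 * (x - t)) := by
        have hlt_le : (l - t) / (1 - t) ≤ 1 := (div_le_one ht_sub).2 (by linarith)
        have hx_le : x / ((1 + x) * (1 + t)) ≤ 1 / 2 := by
          rw [div_le_div_iff₀ (by positivity) two_pos]
          nlinarith
        gcongr
    _ = (x - t) / 2 := by ring

theorem neg_sq_div_four_le_profileBregman {l t s : ℝ} (ht : 0 ≤ t) (hts : t ≤ s) (hsl : s ≤ l)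
    (hl : l < 1) : -((s - t) ^ 2 / 4) ≤ profileBregman l t s := by
  have hderiv (x : ℝ) : HasDerivAt (fun x => -((x - t) ^ 2 / 4)) (-((x - t) / 2)) x := by
    refine ((((hasDerivAt_id x).sub_const t).pow 2).div_const 4).neg.congr_deriv ?_
    simp only [id_eq]
    ring
  have := sub_le_sub_of_hasDerivAt_le hts (fun x _ => hderiv x)
    (fun x hx => hasDerivAt_profileBregman l t ⟨by linarith [hx.1], by linarith [hx.2]⟩)
    fun x hx => by
      linarith [tanOfSin_mul_sub_le_half ht hx.1.le (by linarith [hx.2]) (hts.trans hsl) hl.le]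
  simp only [sub_self, profileBregman_self] at this
  linarith

theorem neg_sq_div_four_le_profileBregman_of_lt {l t s : ℝ} (ht : 0 ≤ t) (htl : t < l)
    (hl : l < 1) (hts : t ≤ s) (hs : s < 1) : -((l - t) ^ 2 / 4) ≤ profileBregman l t s := by
  rcases le_total s l with hsl | hls
  · calc -((l - t) ^ 2 / 4) ≤ -((s - t) ^ 2 / 4) := by gcongr
      _ ≤ profileBregman l t s := neg_sq_div_four_le_profileBregman ht hts hsl hl
  · refine (neg_sq_div_four_le_profileBregman ht htl.le le_rfl hl).trans
      (profileBregman_le_of_deriv_nonneg (ht.trans htl.le) hls hs fun x hx => ?_)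
    calc tanOfSin x * (l - x) ≤ 0 := mul_nonpos_of_nonneg_of_nonpos
          (tanOfSin_nonneg (by linarith [hx.1])) (by linarith [hx.1])
      _ ≤ tanOfSin t * (l - t) := mul_nonneg (tanOfSin_nonneg ht) (by linarith)

theorem four_mul_sq_mul_sub_le {t x : ℝ} (hx : 0 ≤ x) (hxt : x ≤ t) (ht : t ≤ 4 / 5) :
    4 * t ^ 2 * (t - x) ≤ (1 - t * x) ^ 2 * (3 * t + x) := by
  have ht0 : 0 ≤ t := hx.trans hxt
  have hxt' : 0 ≤ t - x := sub_nonneg.2 hxt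
  have hx1 : 0 ≤ 1 - 4 / 5 * x := by linarith
  calc 4 * t ^ 2 * (t - x) ≤ 4 * (4 / 5) ^ 2 * (t - x) := by gcongr
    _ ≤ (1 - 4 / 5 * x) ^ 2 * (3 * t + x) := by
        nlinarith [mul_nonneg hx hxt', mul_nonneg hx hx1, mul_nonneg (mul_nonneg hx hx) hxt',
          mul_nonneg (sub_nonneg.2 ht) (sq_nonneg (1 - 4 / 5 * x)), mul_nonneg (sub_nonneg.2 ht) hx,
          mul_nonneg hx (sq_nonneg (x - 2 / 5)), sq_nonneg (x - 2 / 5)]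
    _ ≤ (1 - t * x) ^ 2 * (3 * t + x) := by gcongr

theorem add_mul_one_sub_mul_le_mul_sqrt {t x : ℝ} (hx : 0 ≤ x) (hxt : x ≤ t) (ht : t ≤ 4 / 5) :
    (t + x) * (1 - t * x) ≤ 2 * t * (√(1 - t ^ 2) * √(1 - x ^ 2)) := by
  have ht0 : 0 ≤ t := hx.trans hxt
  have ht_sq : 0 ≤ 1 - t ^ 2 := by nlinarith
  have hx_sq : 0 ≤ 1 - x ^ 2 := by nlinarith
  refine le_of_sq_le_sq ?_ (by positivity)
  rw [← Real.sqrt_mul ht_sq, mul_pow (2 * t), Real.sq_sqrt (mul_nonneg ht_sq hx_sq), ← sub_nonneg]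
  calc 0 ≤ (t - x) * ((1 - t * x) ^ 2 * (3 * t + x) - 4 * t ^ 2 * (t - x)) :=
        mul_nonneg (sub_nonneg.2 hxt) (sub_nonneg.2 (four_mul_sq_mul_sub_le hx hxt ht))
    _ = (2 * t) ^ 2 * ((1 - t ^ 2) * (1 - x ^ 2)) - ((t + x) * (1 - t * x)) ^ 2 := by ring

theorem mul_sq_tanOfSin_sub_le {t x : ℝ} (hx : 0 ≤ x) (hxt : x ≤ t) (ht : t ≤ 4 / 5) :
    t * (tanOfSin t - tanOfSin x) ^ 2 ≤ tanOfSin t ^ 2 * (t - x) := by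
  have ht_sq : 0 < 1 - t ^ 2 := by nlinarith
  have hx_sq : 0 < 1 - x ^ 2 := by nlinarith
  have hcos_t := Real.sqrt_pos.2 ht_sq
  have hcos_x := Real.sqrt_pos.2 hx_sq
  have hsum : (t + x) * (1 - t * x) = t * √(1 - x ^ 2) ^ 2 + x * √(1 - t ^ 2) ^ 2 := by
    rw [Real.sq_sqrt ht_sq.le, Real.sq_sqrt hx_sq.le]
    ring
  have hgap : tanOfSin t ^ 2 * (t - x) - t * (tanOfSin t - tanOfSin x) ^ 2 =
      t * x * (2 * t * (√(1 - t ^ 2) * √(1 - x ^ 2)) - (t + x) * (1 - t * x)) /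
        (√(1 - t ^ 2) ^ 2 * √(1 - x ^ 2) ^ 2) := by
    rw [hsum, tanOfSin, tanOfSin]
    field_simp
    ring
  rw [← sub_nonneg, hgap]
  have hcos := sub_nonneg.2 (add_mul_one_sub_mul_le_mul_sqrt hx hxt ht)
  exact div_nonneg (mul_nonneg (mul_nonneg (hx.trans hxt) hx) hcos) (by positivity)

theorem tanOfSin_mul_sub_le_mul_sq {l t x : ℝ} (hx : 0 ≤ x) (hxt : x < t) (ht : t ≤ 4 / 5) :
    tanOfSin x * (tanOfSin t * (l - t) - tanOfSin x * (l - x)) ≤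
      (l - t) ^ 2 * tanOfSin t ^ 2 / (4 * t) := by
  have hgap := mul_le_mul_of_nonneg_left (mul_sq_tanOfSin_sub_le hx hxt.le ht) (sq_nonneg (l - t))
  have ht0 : 0 < t := hx.trans_lt hxt
  rw [le_div_iff₀ (by positivity)]
  refine le_of_mul_le_mul_right ?_ (sub_pos.2 hxt)
  -- Expanding this square leaves exactly the gap in `mul_sq_tanOfSin_sub_le`.
  have hsq : 0 ≤ t * ((l - t) * (tanOfSin t - tanOfSin x) - 2 * tanOfSin x * (t - x)) ^ 2 := by
    positivity
  linarith

theorem neg_sq_mul_le_profileBregman {l t s : ℝ} (hs : 0 ≤ s) (hst : s < t) (ht : t ≤ 4 / 5) :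
    -((l - t) ^ 2 * tanOfSin t ^ 2 / 4) ≤ profileBregman l t s := by
  have ht0 : 0 < t := hs.trans_lt hst
  set c := (l - t) ^ 2 * tanOfSin t ^ 2 / (4 * t) with hc
  have hdrop := sub_le_sub_of_hasDerivAt_le hst.le
    (fun x hx => hasDerivAt_profileBregman l t ⟨by linarith [hx.1], by linarith [hx.2]⟩)
    (fun x _ => hasDerivAt_const_mul c)
    fun x hx => tanOfSin_mul_sub_le_mul_sq (hs.trans hx.1.le) hx.2 ht
  rw [profileBregman_self] at hdrop
  have hct : c * t = (l - t) ^ 2 * tanOfSin t ^ 2 / 4 := by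
    rw [hc]
    field_simp
  have hcs : 0 ≤ c * s := by positivity
  linarith

theorem profileBregman_one_zero {t : ℝ} (ht : t ^ 2 < 1) :
    profileBregman 1 t 0 = Real.log (1 + t) - t ^ 2 / 2 - tanOfSin t * (1 - t) := by
  have hexpand : profileBregman 1 t 0 = Real.log (1 + t) + t ^ 2 / 2 - t - tanOfSin t * (1 - t) +
      tanOfSin t * √(1 - t ^ 2) * (1 - t) := by
    simp only [profileBregman, profile, ne_eq, two_ne_zero, not_false_eq_true, zero_pow, sub_zero,
      add_zero, Real.log_one, Real.sqrt_one, sub_self]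
    ring
  rw [hexpand, tanOfSin_mul_sqrt ht]
  ring

theorem profileBregman_one_nonneg {t s : ℝ} (hs : 0 ≤ s) (hst : s < t) (ht : 4 / 5 ≤ t)
    (ht1 : t < 1) : 0 ≤ profileBregman 1 t s := by
  rcases le_or_gt (tanOfSin s * (1 - s)) (tanOfSin t * (1 - t)) with hle | hgt
  · calc 0 ≤ profileBregman 1 t 0 := by
          rw [profileBregman_one_zero (pow_lt_one₀ (by linarith) ht1 two_ne_zero)]
          linarith [half_sq_add_tanOfSin_mul_lt_log ht ht1]
      _ ≤ profileBregman 1 t s :=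
          profileBregman_le_of_deriv_nonneg le_rfl hs (hst.trans ht1) fun x hx =>
            tanOfSin_mul_one_sub_le_of_le hx.1.le hx.2.le hst ht1 hle
  · calc 0 = profileBregman 1 t t := (profileBregman_self 1 t).symm
      _ ≤ profileBregman 1 t s :=
          profileBregman_le_of_deriv_nonpos hs hst.le ht1 fun x hx => by
            by_contra! hlt
            exact hgt.not_ge (tanOfSin_mul_one_sub_le_of_le hs hx.1.le hx.2 ht1 hlt.le)

theorem profileBregman_nonneg_of_four_fifths_le {l t s : ℝ} (htl : t ≤ l) (hl : l < 1)
    (hs : 0 ≤ s) (hst : s < t) (ht : 4 / 5 ≤ t) : 0 ≤ profileBregman l t s := by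
  have ht1 : t < 1 := htl.trans_lt hl
  refine nonneg_of_mul_nonneg_right (a := 1 - t) ?_ (sub_pos.2 ht1)
  rw [profileBregman_affine]
  exact add_nonneg
    (mul_nonneg (by linarith)
      (profileBregman_pos_of_le (by linarith) le_rfl ht1 hs (hst.trans ht1) hst.ne).le)
    (mul_nonneg (by linarith) (profileBregman_one_nonneg hs hst ht ht1))

theorem profileBregman_add_half_sq_pos_of_lt {l t s : ℝ} (hl1 : l < 1) (ht : 0 ≤ t) (htl : t < l)
    (hs : 0 ≤ s) (hs1 : s < 1) : 0 < profileBregman l t s + (l - t) ^ 2 / 2 := by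
  have hgap : 0 < (l - t) ^ 2 := pow_pos (sub_pos.2 htl) 2
  rcases le_or_gt t s with hts | hst
  · linarith [neg_sq_div_four_le_profileBregman_of_lt ht htl hl1 hts hs1]
  rcases le_total t (4 / 5) with ht_le | ht_ge
  · have htan : tanOfSin t ^ 2 < 2 := by
      rw [tanOfSin_sq (by nlinarith), div_lt_iff₀ (by nlinarith)]
      nlinarith
    nlinarith [neg_sq_mul_le_profileBregman (l := l) hs hst ht_le]
  · linarith [profileBregman_nonneg_of_four_fifths_le htl.le hl1 hs hst ht_ge]

theorem profileBregman_add_half_sq_pos {l t s : ℝ} (hl : 0 ≤ l) (hl1 : l < 1) (ht : 0 ≤ t)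
    (ht1 : t < 1) (hs : 0 ≤ s) (hs1 : s < 1) (hne : ¬(t = l ∧ s = l)) :
    0 < profileBregman l t s + (l - t) ^ 2 / 2 := by
  rcases lt_or_ge t l with htl | hlt
  · exact profileBregman_add_half_sq_pos_of_lt hl1 ht htl hs hs1
  by_cases hst : s = t
  · have : l - t ≠ 0 := fun h => hne ⟨by linarith, by linarith⟩
    rw [hst, profileBregman_self]
    positivity
  · have := profileBregman_pos_of_le hl hlt ht1 hs hs1 hst
    positivity

section Space

variable {d : ℕ}

theorem sq_add_sq_le_norm_sq (x : Euc d) : x 0 ^ 2 + x 1 ^ 2 ≤ ‖x‖ ^ 2 := by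
  rw [EuclideanSpace.real_norm_sq_eq, Fin.sum_univ_succ, Fin.sum_univ_succ, ← add_assoc]
  exact le_add_of_nonneg_right (Finset.sum_nonneg fun i _ => sq_nonneg _)

theorem norm_e (j : Fin (d + 2)) : ‖e d j‖ = 1 := by
  rw [e, PiLp.norm_single, norm_one]

theorem inner_e_right (x : Euc d) (j : Fin (d + 2)) : inner ℝ x (e d j) = x j := by
  simp [e, EuclideanSpace.inner_single_right]

theorem norm_sub_smul_e_sq (x : Euc d) (c : ℝ) (j : Fin (d + 2)) :
    ‖x - c • e d j‖ ^ 2 = ‖x‖ ^ 2 - 2 * c * x j + c ^ 2 := by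
  rw [norm_sub_sq_real, norm_smul, mul_pow, inner_smul_right, inner_e_right, norm_e,
    Real.norm_eq_abs, sq_abs]
  ring

theorem norm_smul_sub_add_smul_e_sq (x : Euc d) (c k : ℝ) (j : Fin (d + 2)) :
    ‖c • (x - x j • e d j) + k • e d j‖ ^ 2 = c ^ 2 * (‖x‖ ^ 2 - x j ^ 2) + k ^ 2 := by
  have horth : inner ℝ (c • (x - x j • e d j)) (k • e d j) = 0 := by
    simp [inner_smul_left, inner_smul_right, inner_sub_left, inner_e_right, norm_e]
  rw [norm_add_sq_real, horth, norm_smul, norm_smul, mul_pow, mul_pow, norm_sub_smul_e_sq, norm_e,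
    Real.norm_eq_abs, Real.norm_eq_abs, sq_abs, sq_abs]
  ring

theorem norm_sub_xStar_sq {lam : ℝ} (hlam : lam ^ 2 ≤ 1) (x : Euc d) :
    ‖x - xStar d lam‖ ^ 2 = ‖x‖ ^ 2 - 2 * (√(1 - lam ^ 2) * x 0 + lam * x 1) + 1 := by
  rw [xStar, ← sub_sub, norm_sub_smul_e_sq, norm_sub_smul_e_sq, Real.sq_sqrt (sub_nonneg.2 hlam)]
  have hsnd : (x - √(1 - lam ^ 2) • e d 0) 1 = x 1 := by simp [e]
  rw [hsnd]
  ring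

theorem DR_sub_smul_e (lam : ℝ) (x : Euc d) :
    DR d lam x - lam • e d 1 = (1 - 1 / ‖x‖) • (x - x 0 • e d 0) + (x 0 / ‖x‖) • e d 0 := by
  ext i
  refine Fin.cases ?_ (fun i => Fin.cases ?_ (fun i => ?_) i) i
  · simp [DR, e, Pi.single_apply]
  · simp [DR, e, Pi.single_apply]
  · have hi : i.succ.succ ≠ (1 : Fin (d + 2)) := Fin.succ_succ_ne_one i
    simp [DR, e, Pi.single_apply, hi]

theorem DR_apply_zero (lam : ℝ) (x : Euc d) : DR d lam x 0 = x 0 / ‖x‖ := by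
  simpa [e] using congrArg (· 0) (DR_sub_smul_e lam x)

theorem norm_xStar {lam : ℝ} (hlam : lam ^ 2 ≤ 1) : ‖xStar d lam‖ = 1 := by
  have hsq : ‖xStar d lam‖ ^ 2 = 1 := by simpa using norm_sub_xStar_sq hlam (0 : Euc d)
  exact (pow_eq_one_iff_of_nonneg (norm_nonneg _) two_ne_zero).1 hsq

theorem DR_xStar {lam : ℝ} (hlam : lam ^ 2 ≤ 1) : DR d lam (xStar d lam) = xStar d lam := by
  have h := DR_sub_smul_e lam (xStar d lam)
  rw [norm_xStar hlam, sub_eq_iff_eq_add] at h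
  simpa [xStar, e] using h

theorem eq_xStar_of_norm_eq_one {lam : ℝ} (hlam : lam ^ 2 ≤ 1) {x : Euc d} (hnorm : ‖x‖ = 1)
    (hfst : x 0 = √(1 - lam ^ 2)) (hsnd : lam * (lam - x 1) = 0) : x = xStar d lam := by
  have hdist : ‖x - xStar d lam‖ ^ 2 = 0 := by
    rw [norm_sub_xStar_sq hlam, hnorm, hfst, Real.mul_self_sqrt (sub_nonneg.2 hlam)]
    linarith
  exact sub_eq_zero.1 (norm_eq_zero.1 (sq_eq_zero_iff.1 hdist))

theorem norm_pos_of_mem_Delta {x : Euc d} (hx : x ∈ Delta d) : 0 < ‖x‖ :=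
  norm_pos_iff.2 fun h => by simpa [h] using hx.1

theorem DR_mem_Delta (lam : ℝ) {x : Euc d} (hx : x ∈ Delta d) : DR d lam x ∈ Delta d := by
  have hr := norm_pos_of_mem_Delta hx
  have hle : x 0 ≤ ‖x‖ := (le_abs_self _).trans (PiLp.norm_apply_le x 0)
  simp only [Delta, mem_ofPred_eq, DR_apply_zero]
  exact ⟨div_pos hx.1 hr, (div_le_one hr).2 hle⟩

/-- The sine of the angle whose cosine is the first coordinate of `x ∈ Δ`. -/
def sinOfFst (x : Euc d) : ℝ := √(1 - x 0 ^ 2)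

theorem sinOfFst_nonneg (x : Euc d) : 0 ≤ sinOfFst x :=
  Real.sqrt_nonneg _

theorem sinOfFst_sq {x : Euc d} (hx : x ∈ Delta d) : sinOfFst x ^ 2 = 1 - x 0 ^ 2 :=
  Real.sq_sqrt (sub_nonneg.2 (pow_le_one₀ hx.1.le hx.2))

theorem sinOfFst_lt_one {x : Euc d} (hx : x ∈ Delta d) : sinOfFst x < 1 := by
  rw [sinOfFst, Real.sqrt_lt' one_pos]
  linarith [pow_pos hx.1 2]

theorem sqrt_one_sub_sinOfFst_sq {x : Euc d} (hx : x ∈ Delta d) :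
    √(1 - sinOfFst x ^ 2) = x 0 := by
  rw [sinOfFst_sq hx, sub_sub_cancel, Real.sqrt_sq hx.1.le]

theorem norm_mul_sinOfFst_DR_sq (lam : ℝ) {x : Euc d} (hx : x ∈ Delta d) :
    (‖x‖ * sinOfFst (DR d lam x)) ^ 2 = ‖x‖ ^ 2 - x 0 ^ 2 := by
  have hr := norm_pos_of_mem_Delta hx
  rw [mul_pow, sinOfFst_sq (DR_mem_Delta lam hx), DR_apply_zero]
  field_simp

theorem apply_one_le_norm_mul_sinOfFst_DR (lam : ℝ) {x : Euc d} (hx : x ∈ Delta d) :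
    x 1 ≤ ‖x‖ * sinOfFst (DR d lam x) := by
  refine le_of_sq_le_sq ?_ (mul_nonneg (norm_nonneg x) (sinOfFst_nonneg _))
  rw [norm_mul_sinOfFst_DR_sq lam hx]
  linarith [sq_add_sq_le_norm_sq x]

theorem tanOfSin_sinOfFst_DR_mul_sub (lam : ℝ) {x : Euc d} (hx : x ∈ Delta d) :
    tanOfSin (sinOfFst (DR d lam x)) * (x 0 - DR d lam x 0) =
      sinOfFst (DR d lam x) * (‖x‖ - 1) := by
  have hr := norm_pos_of_mem_Delta hx
  have hx0 := hx.1
  rw [tanOfSin, sqrt_one_sub_sinOfFst_sq (DR_mem_Delta lam hx), DR_apply_zero]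
  field_simp

theorem norm_DR_sub_smul_e_sq (lam : ℝ) {x : Euc d} (hx : x ∈ Delta d) :
    ‖DR d lam x - lam • e d 1‖ ^ 2 =
      (‖x‖ - 1) ^ 2 * sinOfFst (DR d lam x) ^ 2 + DR d lam x 0 ^ 2 := by
  have hr := norm_pos_of_mem_Delta hx
  rw [DR_sub_smul_e, norm_smul_sub_add_smul_e_sq, ← norm_mul_sinOfFst_DR_sq lam hx, DR_apply_zero]
  field_simp

theorem F_eq_profile (lam : ℝ) {x : Euc d} (hx : x ∈ Delta d) :
    F d lam x = (‖x - lam • e d 1‖ ^ 2 - x 0 ^ 2) / 2 + profile lam (sinOfFst x) := by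
  rw [F, profile, sinOfFst_sq hx, sinOfFst, sub_sub_cancel, Real.log_pow]
  push_cast
  ring

theorem F_sub_F_DR (lam : ℝ) {x : Euc d} (hx : x ∈ Delta d) :
    F d lam x - F d lam (DR d lam x) =
      profileBregman lam (sinOfFst (DR d lam x)) (sinOfFst x) +
        (lam - sinOfFst (DR d lam x)) ^ 2 / 2 +
        lam * (‖x‖ * sinOfFst (DR d lam x) - x 1) := by
  have hTx := DR_mem_Delta lam hx
  rw [F_eq_profile lam hx, F_eq_profile lam hTx, norm_DR_sub_smul_e_sq lam hx, norm_sub_smul_e_sq,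
    profileBregman, sqrt_one_sub_sinOfFst_sq hx, sqrt_one_sub_sinOfFst_sq hTx]
  linear_combination -norm_mul_sinOfFst_DR_sq lam hx / 2 +
    (lam - sinOfFst (DR d lam x)) * tanOfSin_sinOfFst_DR_mul_sub lam hx

theorem sinOfFst_eq_of_F_DR_eq {lam : ℝ} (h0 : 0 ≤ lam) (h1 : lam < 1) {x : Euc d}
    (hx : x ∈ Delta d) (hF : F d lam (DR d lam x) = F d lam x) :
    sinOfFst (DR d lam x) = lam ∧ sinOfFst x = lam := by
  by_contra hne
  have hpos := profileBregman_add_half_sq_pos h0 h1 (sinOfFst_nonneg _)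
    (sinOfFst_lt_one (DR_mem_Delta lam hx)) (sinOfFst_nonneg x) (sinOfFst_lt_one hx) hne
  have hsnd := mul_nonneg h0 (sub_nonneg.2 (apply_one_le_norm_mul_sinOfFst_DR lam hx))
  linarith [F_sub_F_DR lam hx]

end Space

/-- For `λ ∈ [0,1)` and `x ∈ Δ`, `F(T x) = F(x)` iff `x = x*`. -/
theorem stmt6 (d : ℕ) (lam : ℝ) (h0 : 0 ≤ lam) (h1 : lam < 1) :
    ∀ x ∈ Delta d, (F d lam (DR d lam x) = F d lam x ↔ x = xStar d lam) := by
  intro x hx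
  have hlam : lam ^ 2 ≤ 1 := pow_le_one₀ h0 h1.le
  refine ⟨fun hF => ?_, fun hx_eq => by rw [hx_eq, DR_xStar hlam]⟩
  have hTx := DR_mem_Delta lam hx
  obtain ⟨ht, hs⟩ := sinOfFst_eq_of_F_DR_eq h0 h1 hx hF
  have hfst : x 0 = √(1 - lam ^ 2) := by rw [← hs, sqrt_one_sub_sinOfFst_sq hx]
  have hnorm : ‖x‖ = 1 := by
    have hfst_eq : x 0 / ‖x‖ = x 0 := by
      rw [← DR_apply_zero lam, ← sqrt_one_sub_sinOfFst_sq hTx, ht, hfst]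
    rwa [div_eq_iff (norm_pos_of_mem_Delta hx).ne', left_eq_mul₀ hx.1.ne'] at hfst_eq
  have hdrop := F_sub_F_DR lam hx
  simp only [hF, ht, hs, hnorm, profileBregman_self, sub_self] at hdrop
  exact eq_xStar_of_norm_eq_one hlam hnorm hfst (by linarith)
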